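/- Let n ≥ 3 be odd and let Q_{4n} be the generalized quaternion (dicyclic) group of order 4n. Then the characteristic polynomial of the adjacency matrix of the order super commuting graph Δ^o(Q_{4n}) is χ(A(Δ^o(Q_{4n})), x) = (x + 1)^{4n−3} · [x³ − (4n − 3)x² + (4n² − 12n + 3)x + (12n² − 16n + 1)]. Moreover, Δ^o(Q_{4n}) has eigenvalue −1 with multiplicity 4n − 3, and the three remaining simple eigenvalues α < β < γ satisfy −3 < α < −2, 2n − 3 < β < 2n − 2, and 2n + 1 < γ < 2n + 2 if 3 ≤ n ≤ 13 while 2n + 2 < γ < 2n + 3 if n ≥ 15. -/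

import Mathlib

open Polynomial

noncomputable section
open scoped Classical

/-- The adjacency matrix (over ℝ) of a finite simple graph. -/
def adjMat {V : Type*} [Fintype V] (Γ : SimpleGraph V) : Matrix V V ℝ :=
  fun u v => if Γ.Adj u v then 1 else 0

/-- The Laplacian matrix `D − A` of a finite simple graph, where `D` is the diagonal
matrix of vertex degrees. -/
def lapMat {V : Type*} [Fintype V] (Γ : SimpleGraph V) : Matrix V V ℝ :=
  Matrix.diagonal (fun v => ((Finset.univ.filter fun u => Γ.Adj v u).card : ℝ)) - adjMat Γ

/-- The `R`-super graph of `Γ`: two distinct vertices are adjacent iff they are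
`R`-equivalent or some members of their respective `R`-classes are adjacent in `Γ`. -/
def superGraph {V : Type*} (Γ : SimpleGraph V) (R : Setoid V) : SimpleGraph V :=
  SimpleGraph.fromRel fun u v =>
    R.r u v ∨ ∃ u' v', R.r u u' ∧ R.r v v' ∧ Γ.Adj u' v'

/-- The `R`-compressed graph of `Γ`, on the set of `R`-classes: two distinct classes are
adjacent iff some vertex of one is adjacent in `Γ` to some vertex of the other. -/
def compressedGraph {V : Type*} (Γ : SimpleGraph V) (R : Setoid V) :
    SimpleGraph (Quotient R) :=
  SimpleGraph.fromRel fun c d => ∃ x y, Quotient.mk R x = c ∧ Quotient.mk R y = d ∧ Γ.Adj x y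

/-- The generalized join `I[K_{n i}]` of complete graphs along the graph `I`:
the vertex `i` of `I` is replaced by the complete graph on `Fin (n i)`, and all edges are
put between the `i`-th and `j`-th complete graphs whenever `i` and `j` are adjacent in `I`. -/
def genJoinK {ι : Type*} (I : SimpleGraph ι) (n : ι → ℕ) : SimpleGraph (Σ i, Fin (n i)) :=
  SimpleGraph.fromRel fun a b => a.1 = b.1 ∨ I.Adj a.1 b.1

/-- The star graph `K_{1,k-1}` on `Fin k`, whose central vertex is the one with value `0`. -/
def starGraph (k : ℕ) : SimpleGraph (Fin k) :=
  SimpleGraph.fromRel fun a _b => a.val = 0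

/-- The order super commuting graph `Δ^o(G)`: distinct `x, y` are adjacent iff
`o(x) = o(y)` or some distinct commuting `x', y'` satisfy `o(x') = o(x)` and `o(y') = o(y)`. -/
def orderSuper (G : Type*) [Group G] : SimpleGraph G :=
  SimpleGraph.fromRel fun x y =>
    orderOf x = orderOf y ∨
      ∃ x' y' : G, x' ≠ y' ∧ x' * y' = y' * x' ∧ orderOf x' = orderOf x ∧ orderOf y' = orderOf y

/-- The conjugacy super commuting graph `Δ^c(G)`: distinct `x, y` are adjacent iff
`x` is conjugate to `y` or some distinct commuting `x', y'` are conjugate to `x` and `y`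
respectively. -/
def conjSuper (G : Type*) [Group G] : SimpleGraph G :=
  SimpleGraph.fromRel fun x y =>
    IsConj x y ∨ ∃ x' y' : G, x' ≠ y' ∧ x' * y' = y' * x' ∧ IsConj x x' ∧ IsConj y y'

/-!
For odd `n` no power of `a` has order `4`, whereas every `xa j` has; and `a i` commutes with `xa j`
only if `2i = 0`, which is a condition on the order of `a i`. Hence `Δ^o(Q_{4n})` is the path
`K_{1,2}` with its centre replaced by the clique on the `2` elements of order at most `2` and its
leaves by the cliques on the other `2n - 2` powers of `a` and on the `2n` elements `xa j`.

For such a blow-up `A + 1` is constant on blocks, so it factors through the `3 × 3` quotient matrix,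
and `χ(PQ) = X^k χ(QP)` yields the factor `(x + 1)^{4n-3}` and a cubic `p`. The location of the
roots of `p` follows from its signs at integers: `p(2n + d) = 2(d² - 5)n + (d + 1)³` is linear in
`n`, and at `d = 2` it equals `27 - 2n`, which is why `γ` crosses `2n + 2` between `n = 13` and
`n = 15`.
-/

section Polynomial

variable {R : Type*} [CommRing R] [IsDomain R] {p : R[X]}

lemma monic_eq_prod_X_sub_C_of_isRoot (hp : p.Monic) {s : Finset R} (hs : ∀ r ∈ s, p.IsRoot r)
    (hcard : p.natDegree = s.card) : p = ∏ r ∈ s, (X - C r) := by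
  have hroots : p.roots = s.val := roots_eq_of_natDegree_le_card_of_ne_zero hs hcard.le hp.ne_zero
  have hprod := prod_multiset_X_sub_C_of_monic_of_roots_card_eq hp (by rw [hroots, hcard]; rfl)
  rw [hroots] at hprod
  exact hprod.symm

lemma monic_cubic_eq_prod_X_sub_C (hp : p.Monic) (hdeg : p.natDegree = 3) {α β γ : R}
    (hαβ : α ≠ β) (hαγ : α ≠ γ) (hβγ : β ≠ γ)
    (hα : p.IsRoot α) (hβ : p.IsRoot β) (hγ : p.IsRoot γ) :
    p = (X - C α) * (X - C β) * (X - C γ) := by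
  classical
  have hcard : ({α, β, γ} : Finset R).card = 3 :=
    Finset.card_eq_three.2 ⟨α, β, γ, hαβ, hαγ, hβγ, rfl⟩
  have hroots : ∀ r ∈ ({α, β, γ} : Finset R), p.IsRoot r := by simpa using ⟨hα, hβ, hγ⟩
  rw [monic_eq_prod_X_sub_C_of_isRoot hp hroots (hdeg.trans hcard.symm),
    Finset.prod_insert (by simp [hαβ, hαγ]), Finset.prod_pair hβγ, mul_assoc]

lemma exists_isRoot_mem_Ioo_of_eval_mul_eval_neg (p : ℝ[X]) {l r : ℝ} (hlr : l < r)
    (hp : p.eval l * p.eval r < 0) : ∃ x ∈ Set.Ioo l r, p.IsRoot x := by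
  rcases mul_neg_iff.1 hp with ⟨hl, hr⟩ | ⟨hl, hr⟩
  · exact intermediate_value_Ioo' hlr.le p.continuousOn ⟨hr, hl⟩
  · exact intermediate_value_Ioo hlr.le p.continuousOn ⟨hl, hr⟩

end Polynomial

section Blowup

open scoped Finset

variable {V ι : Type*}

/-- The graph obtained from `I` by replacing each vertex `i` by the clique on the fibre
`c ⁻¹' {i}`, all edges being put between the cliques of adjacent vertices. It is the generalized
join `genJoinK`, presented on an arbitrary vertex set by a labelling `c` instead of a sigma type. -/
def cliqueBlowup (I : SimpleGraph ι) (c : V → ι) : SimpleGraph V :=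
  SimpleGraph.fromRel fun u v => c u = c v ∨ I.Adj (c u) (c v)

lemma cliqueBlowup_adj {I : SimpleGraph ι} {c : V → ι} {u v : V} :
    (cliqueBlowup I c).Adj u v ↔ u ≠ v ∧ (c u = c v ∨ I.Adj (c u) (c v)) := by
  simp only [cliqueBlowup, SimpleGraph.fromRel_adj, eq_comm (a := c v), I.adj_comm (c v), or_self]

variable [Fintype V] [Fintype ι] [DecidableEq V] [DecidableEq ι]

lemma charpoly_submatrix_eq_X_pow_mul {R : Type*} [CommRing R] (M : Matrix ι ι R) (c : V → ι)
    (hcard : Fintype.card ι ≤ Fintype.card V) :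
    (M.submatrix c c).charpoly = X ^ (Fintype.card V - Fintype.card ι) *
      (M * Matrix.diagonal fun i => (#{v | c v = i} : R)).charpoly := by
  let P : Matrix V ι R := (1 : Matrix ι ι R).submatrix c id
  let Q : Matrix ι V R := M.submatrix id c
  have hPQ : M.submatrix c c = P * Q := by
    simp only [P, Q, ← Matrix.submatrix_mul _ _ c id c Function.bijective_id, Matrix.one_mul]
  have hQP : Q * P = M * Matrix.diagonal fun i => (#{v | c v = i} : R) := by
    ext i j
    simp only [P, Q, Matrix.mul_diagonal, Matrix.mul_apply (M := M.submatrix id c),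
      Matrix.submatrix_apply, id, Matrix.one_apply, mul_ite, mul_one, mul_zero,
      ← Finset.sum_filter]
    rw [Finset.sum_congr rfl fun v hv => by rw [(Finset.mem_filter.1 hv).2], Finset.sum_const,
      nsmul_eq_mul, mul_comm]
  rw [hPQ, Matrix.charpoly_mul_comm_of_le _ _ hcard, hQP]

lemma adjMat_cliqueBlowup (I : SimpleGraph ι) (c : V → ι) :
    adjMat (cliqueBlowup I c) = (adjMat I + 1).submatrix c c - 1 := by
  ext u v
  by_cases huv : u = v
  · simp [adjMat, huv]
  · by_cases hc : c u = c v <;> simp [adjMat, cliqueBlowup_adj, huv, hc]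

theorem charpoly_adjMat_cliqueBlowup (I : SimpleGraph ι) (c : V → ι)
    (hcard : Fintype.card ι ≤ Fintype.card V) :
    (adjMat (cliqueBlowup I c)).charpoly =
      (X + 1) ^ (Fintype.card V - Fintype.card ι) *
        ((adjMat I + 1) * Matrix.diagonal fun i =>
          (#{v | c v = i} : ℝ)).charpoly.comp (X + 1) := by
  rw [adjMat_cliqueBlowup, ← map_one (Matrix.scalar V), Matrix.charpoly_sub_scalar,
    charpoly_submatrix_eq_X_pow_mul _ _ hcard, mul_comp, X_pow_comp, C_1]

end Blowup

section Star

lemma starGraph_adj {k : ℕ} {i j : Fin k} :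
    (starGraph k).Adj i j ↔ i ≠ j ∧ (i.val = 0 ∨ j.val = 0) := by
  simp [starGraph]

lemma adjMat_starGraph_three_add_one :
    adjMat (starGraph 3) + 1 = !![1, 1, 1; 1, 1, 0; 1, 0, 1] := by
  ext i j
  fin_cases i <;> fin_cases j <;> simp [adjMat, starGraph_adj]

lemma charpoly_starGraph_three_mul_diagonal (p q r : ℝ) :
    ((adjMat (starGraph 3) + 1) * Matrix.diagonal ![p, q, r]).charpoly =
      X ^ 2 * (X - C (p + q + r)) + C (q * r) * (X + C p) := by
  have hmul : (adjMat (starGraph 3) + 1) * Matrix.diagonal ![p, q, r] =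
      !![p, q, r; p, q, 0; p, 0, r] := by
    rw [adjMat_starGraph_three_add_one]
    ext i j
    fin_cases i <;> fin_cases j <;> simp
  rw [hmul, Matrix.charpoly, Matrix.det_fin_three]
  simp
  ring

end Star

section Cyclic

open scoped Finset

lemma card_filter_nsmul_eq_zero {A : Type*} [AddCommGroup A] [IsAddCyclic A] [Fintype A]
    [DecidableEq A] (d : ℕ) : #{x : A | d • x = 0} = (Fintype.card A).gcd d := by
  rw [← Nat.card_eq_fintype_card, ← IsAddCyclic.card_nsmulAddMonoidHom_ker]
  exact (Nat.subtype_card _ fun x => by simp [AddMonoidHom.mem_ker]).symm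

end Cyclic

section OrderSuper

variable {G : Type*} [Group G] {x y : G}

lemma orderSuper_adj :
    (orderSuper G).Adj x y ↔ x ≠ y ∧ (orderOf x = orderOf y ∨
      ∃ x' y' : G, x' ≠ y' ∧ Commute x' y' ∧ orderOf x' = orderOf x ∧ orderOf y' = orderOf y) := by
  rw [orderSuper, SimpleGraph.fromRel_adj, and_congr_right_iff]
  refine fun _ => or_iff_left_of_imp ?_
  rintro (h | ⟨y', x', hne, hcomm, hy, hx⟩)
  · exact .inl h.symm
  · exact .inr ⟨x', y', hne.symm, hcomm.symm, hx, hy⟩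

lemma orderSuper_adj_of_orderOf_eq (hne : x ≠ y) (h : orderOf x = orderOf y) :
    (orderSuper G).Adj x y :=
  orderSuper_adj.2 ⟨hne, .inl h⟩

lemma orderSuper_adj_of_commute (hne : x ≠ y) (h : Commute x y) : (orderSuper G).Adj x y :=
  orderSuper_adj.2 ⟨hne, .inr ⟨x, y, hne, h, rfl, rfl⟩⟩

end OrderSuper

section Quaternion

open QuaternionGroup
open scoped Finset

variable {n : ℕ}

lemma orderOf_a_dvd_two_iff (i : ZMod (2 * n)) :
    orderOf (a i : QuaternionGroup n) ∣ 2 ↔ i + i = 0 := by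
  rw [orderOf_dvd_iff_pow_eq_one, sq, a_mul_a, one_def, a.injEq]

lemma commute_a_a (i j : ZMod (2 * n)) : Commute (a i : QuaternionGroup n) (a j) := by
  rw [Commute, SemiconjBy, a_mul_a, a_mul_a, add_comm]

lemma commute_a_xa_iff (i j : ZMod (2 * n)) :
    Commute (a i : QuaternionGroup n) (xa j) ↔ i + i = 0 := by
  rw [Commute, SemiconjBy, a_mul_xa, xa_mul_a, xa.injEq, sub_eq_iff_eq_add, add_assoc,
    left_eq_add]

/-- The label of an element of `Q_{4n}` in the star `K_{1,2}` underlying `Δ^o(Q_{4n})`: the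
centre `0` for the elements of order at most `2`, the leaf `1` for the other powers of `a`, and the
leaf `2` for the elements `xa j`. -/
def starLabel : QuaternionGroup n → Fin 3
  | a i => if i + i = 0 then 0 else 1
  | xa _ => 2

@[simp] lemma starLabel_a (i : ZMod (2 * n)) :
    starLabel (a i) = if i + i = 0 then 0 else 1 := rfl

@[simp] lemma starLabel_xa (i : ZMod (2 * n)) : starLabel (xa i) = 2 := rfl

variable [NeZero n]

lemma orderOf_a_ne_four (hodd : Odd n) (i : ZMod (2 * n)) :
    orderOf (a i : QuaternionGroup n) ≠ 4 := by
  intro h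
  have hdvd : 4 ∣ 2 * n := by
    rw [← h, orderOf_a]
    exact Nat.div_dvd_of_dvd (Nat.gcd_dvd_left _ _)
  obtain ⟨k, rfl⟩ := hodd
  omega

lemma orderSuper_adj_a_xa_iff (hodd : Odd n) (i j : ZMod (2 * n)) :
    (orderSuper (QuaternionGroup n)).Adj (a i) (xa j) ↔ i + i = 0 := by
  refine ⟨fun h => ?_, fun h => orderSuper_adj_of_commute (by simp) ((commute_a_xa_iff i j).2 h)⟩
  rw [orderSuper_adj, orderOf_xa] at h
  obtain ⟨-, h | ⟨k | k, l | l, -, hcomm, hk, hl⟩⟩ := h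
  · exact absurd h (orderOf_a_ne_four hodd i)
  · exact absurd hl (orderOf_a_ne_four hodd l)
  · rwa [← orderOf_a_dvd_two_iff, ← hk, orderOf_a_dvd_two_iff, ← commute_a_xa_iff k l]
  · exact absurd hl (orderOf_a_ne_four hodd l)
  · exact absurd (hk.symm.trans (orderOf_xa k)) (orderOf_a_ne_four hodd i)

theorem orderSuper_quaternionGroup_eq_cliqueBlowup (hodd : Odd n) :
    orderSuper (QuaternionGroup n) = cliqueBlowup (starGraph 3) starLabel := by
  ext x y
  rw [cliqueBlowup_adj, starGraph_adj]
  rcases x with i | i <;> rcases y with j | j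
  · have hadj : (orderSuper (QuaternionGroup n)).Adj (a i) (a j) ↔ a i ≠ a j :=
      ⟨SimpleGraph.Adj.ne, fun h => orderSuper_adj_of_commute h (commute_a_a i j)⟩
    rw [hadj]
    by_cases hi : i + i = 0 <;> by_cases hj : j + j = 0 <;> simp [hi, hj]
  · rw [orderSuper_adj_a_xa_iff hodd]
    by_cases hi : i + i = 0 <;> simp [hi]
  · rw [SimpleGraph.adj_comm, orderSuper_adj_a_xa_iff hodd]
    by_cases hj : j + j = 0 <;> simp [hj]
  · have hadj : (orderSuper (QuaternionGroup n)).Adj (xa i) (xa j) ↔ xa i ≠ xa j :=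
      ⟨SimpleGraph.Adj.ne, fun h => orderSuper_adj_of_orderOf_eq h (by simp only [orderOf_xa])⟩
    rw [hadj]
    simp

lemma card_filter_add_self_eq_zero : #{i : ZMod (2 * n) | i + i = 0} = 2 := by
  simp only [← two_nsmul, card_filter_nsmul_eq_zero, ZMod.card, Nat.gcd_mul_right_left]

lemma card_filter_starLabel_eq_zero :
    #{x : QuaternionGroup n | starLabel x = 0} = 2 := by
  have himage : ({x : QuaternionGroup n | starLabel x = 0} : Finset _) =
      ({i : ZMod (2 * n) | i + i = 0} : Finset _).image a := by
    ext (i | i) <;> simp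
  rw [himage, Finset.card_image_of_injective _ fun _ _ => a.inj, card_filter_add_self_eq_zero]

lemma card_filter_starLabel_eq_two :
    #{x : QuaternionGroup n | starLabel x = 2} = 2 * n := by
  have himage : ({x : QuaternionGroup n | starLabel x = 2} : Finset _) =
      Finset.univ.image xa := by
    ext (i | i)
    · by_cases hi : i + i = 0 <;> simp [hi]
    · simp
  rw [himage, Finset.card_image_of_injective _ fun _ _ => xa.inj, Finset.card_univ, ZMod.card]

lemma card_filter_starLabel_eq_one :
    (#{x : QuaternionGroup n | starLabel x = 1} : ℝ) = 2 * n - 2 := by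
  have hsum := Finset.card_eq_sum_card_fiberwise (f := starLabel (n := n)) (s := Finset.univ)
    (t := Finset.univ) (fun _ _ => Finset.mem_coe.2 (Finset.mem_univ _))
  rw [Finset.card_univ, QuaternionGroup.card, Fin.sum_univ_three, card_filter_starLabel_eq_zero,
    card_filter_starLabel_eq_two] at hsum
  have hsum' := congrArg (Nat.cast (R := ℝ)) hsum
  push_cast at hsum'
  linarith

lemma card_filter_starLabel :
    (fun i => (#{x : QuaternionGroup n | starLabel x = i} : ℝ)) =
      ![2, 2 * (n : ℝ) - 2, 2 * n] := by
  ext i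
  fin_cases i
  · simp [card_filter_starLabel_eq_zero]
  · simp [card_filter_starLabel_eq_one]
  · simp [card_filter_starLabel_eq_two]

end Quaternion

section Cubic

/-- The cubic factor of the characteristic polynomial of `Δ^o(Q_{4n})` for odd `n`, with a real
parameter `t` in place of `n`. -/
def spectralCubic (t : ℝ) : ℝ[X] :=
  X ^ 3 - C (4 * t - 3) * X ^ 2 + C (4 * t ^ 2 - 12 * t + 3) * X + C (12 * t ^ 2 - 16 * t + 1)

lemma natDegree_spectralCubic (t : ℝ) : (spectralCubic t).natDegree = 3 := by
  unfold spectralCubic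
  compute_degree!

lemma monic_spectralCubic (t : ℝ) : (spectralCubic t).Monic := by
  unfold spectralCubic
  monicity!

lemma eval_spectralCubic (t x : ℝ) :
    (spectralCubic t).eval x =
      x ^ 3 - (4 * t - 3) * x ^ 2 + (4 * t ^ 2 - 12 * t + 3) * x + (12 * t ^ 2 - 16 * t + 1) := by
  simp [spectralCubic]

lemma eval_spectralCubic_two_mul_add (t d : ℝ) :
    (spectralCubic t).eval (2 * t + d) = 2 * (d ^ 2 - 5) * t + (d + 1) ^ 3 := by
  rw [eval_spectralCubic]
  ring

lemma exists_isRoot_spectralCubic_mem_Ioo_two_mul_add {t d e : ℝ} (hde : d < e)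
    (h : (2 * (d ^ 2 - 5) * t + (d + 1) ^ 3) * (2 * (e ^ 2 - 5) * t + (e + 1) ^ 3) < 0) :
    ∃ x ∈ Set.Ioo (2 * t + d) (2 * t + e), (spectralCubic t).IsRoot x :=
  exists_isRoot_mem_Ioo_of_eval_mul_eval_neg _ (by linarith)
    (by rwa [eval_spectralCubic_two_mul_add, eval_spectralCubic_two_mul_add])

lemma exists_isRoot_spectralCubic_mem_Ioo_neg_three_neg_two {t : ℝ} (ht : 3 ≤ t) :
    ∃ x ∈ Set.Ioo (-3) (-2), (spectralCubic t).IsRoot x := by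
  have hl : (spectralCubic t).eval (-3) = -(16 * t + 8) := by rw [eval_spectralCubic]; ring
  have hr : (spectralCubic t).eval (-2) = 4 * t * (t - 3) + (4 * t - 1) := by
    rw [eval_spectralCubic]; ring
  have hsq : 0 ≤ 4 * t * (t - 3) := mul_nonneg (by linarith) (by linarith)
  refine exists_isRoot_mem_Ioo_of_eval_mul_eval_neg _ (by norm_num) (mul_neg_of_neg_of_pos ?_ ?_)
  · linarith
  · linarith

lemma exists_isRoot_spectralCubic_mem_Ioo_sub_three_sub_two {t : ℝ} (ht : 1 < t) :
    ∃ x ∈ Set.Ioo (2 * t - 3) (2 * t - 2), (spectralCubic t).IsRoot x :=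
  exists_isRoot_spectralCubic_mem_Ioo_two_mul_add (d := -3) (e := -2) (by norm_num)
    (mul_neg_of_pos_of_neg (by linarith) (by linarith))

lemma exists_isRoot_spectralCubic_gt_two_mul_add_one {n : ℕ} (hn : 2 ≤ n) :
    ∃ γ : ℝ, 2 * (n : ℝ) + 1 < γ ∧
      (n ≤ 13 → 2 * (n : ℝ) + 1 < γ ∧ γ < 2 * (n : ℝ) + 2) ∧
      (15 ≤ n → 2 * (n : ℝ) + 2 < γ ∧ γ < 2 * (n : ℝ) + 3) ∧ (spectralCubic n).IsRoot γ := by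
  have hn' : (2 : ℝ) ≤ n := by exact_mod_cast hn
  rcases le_or_gt n 13 with h | h
  · have h' : (n : ℝ) ≤ 13 := by exact_mod_cast h
    obtain ⟨γ, hγ, hroot⟩ := exists_isRoot_spectralCubic_mem_Ioo_two_mul_add (t := n)
      (d := 1) (e := 2) (by norm_num) (mul_neg_of_neg_of_pos (by linarith) (by linarith))
    exact ⟨γ, hγ.1, fun _ => hγ, fun _ => by omega, hroot⟩
  · have h' : (14 : ℝ) ≤ n := by exact_mod_cast h
    obtain ⟨γ, hγ, hroot⟩ := exists_isRoot_spectralCubic_mem_Ioo_two_mul_add (t := n)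
      (d := 2) (e := 3) (by norm_num) (mul_neg_of_neg_of_pos (by linarith) (by linarith))
    exact ⟨γ, by linarith [hγ.1], fun _ => by omega, fun _ => hγ, hroot⟩

end Cubic

theorem charpoly_adjMat_orderSuper_quaternionGroup {n : ℕ} [NeZero n] (hodd : Odd n) :
    (adjMat (orderSuper (QuaternionGroup n))).charpoly =
      (X + 1) ^ (4 * n - 3) * spectralCubic n := by
  have hpos := NeZero.pos n
  have hcard : Fintype.card (Fin 3) ≤ Fintype.card (QuaternionGroup n) := by
    rw [Fintype.card_fin, QuaternionGroup.card]
    omega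
  rw [orderSuper_quaternionGroup_eq_cliqueBlowup hodd, charpoly_adjMat_cliqueBlowup _ _ hcard,
    card_filter_starLabel, charpoly_starGraph_three_mul_diagonal, QuaternionGroup.card,
    Fintype.card_fin, spectralCubic]
  congr 1
  simp only [map_ofNat C, map_add, map_sub, map_mul, map_pow, map_natCast, map_one, add_comp,
    sub_comp, mul_comp, pow_comp, X_comp, natCast_comp, ofNat_comp]
  ring

/-- Adjacency spectrum of the order super commuting graph of the generalized quaternion
group `Q_{4n}` for odd `n ≥ 3`: the characteristic polynomial is
`(x+1)^{4n−3} (x³ − (4n−3)x² + (4n²−12n+3)x + (12n²−16n+1))`; moreover `−1` is an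
eigenvalue of multiplicity `4n−3` and the three remaining simple eigenvalues `α < β < γ`
satisfy `−3 < α < −2`, `2n−3 < β < 2n−2`, and `2n+1 < γ < 2n+2` if `3 ≤ n ≤ 13` while
`2n+2 < γ < 2n+3` if `n ≥ 15`. -/
theorem stmt_9 (n : ℕ) [NeZero n] (hn : 3 ≤ n) (hodd : Odd n) :
    (adjMat (orderSuper (QuaternionGroup n))).charpoly =
        (X + 1) ^ (4 * n - 3) *
          (X ^ 3 - C (4 * (n : ℝ) - 3) * X ^ 2 + C (4 * (n : ℝ) ^ 2 - 12 * n + 3) * X +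
            C (12 * (n : ℝ) ^ 2 - 16 * n + 1)) ∧
      ∃ α β γ : ℝ, α < β ∧ β < γ ∧
        (-3 < α ∧ α < -2) ∧ (2 * (n : ℝ) - 3 < β ∧ β < 2 * (n : ℝ) - 2) ∧
        (n ≤ 13 → 2 * (n : ℝ) + 1 < γ ∧ γ < 2 * (n : ℝ) + 2) ∧
        (15 ≤ n → 2 * (n : ℝ) + 2 < γ ∧ γ < 2 * (n : ℝ) + 3) ∧
        (adjMat (orderSuper (QuaternionGroup n))).charpoly =
          (X + 1) ^ (4 * n - 3) * ((X - C α) * (X - C β) * (X - C γ)) := by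
  have ht : (3 : ℝ) ≤ n := by exact_mod_cast hn
  have hχ := charpoly_adjMat_orderSuper_quaternionGroup hodd
  obtain ⟨α, hα, rα⟩ := exists_isRoot_spectralCubic_mem_Ioo_neg_three_neg_two ht
  obtain ⟨β, hβ, rβ⟩ :=
    exists_isRoot_spectralCubic_mem_Ioo_sub_three_sub_two (t := n) (by linarith)
  obtain ⟨γ, hγ, hγ₁₃, hγ₁₅, rγ⟩ :=
    exists_isRoot_spectralCubic_gt_two_mul_add_one (by omega : 2 ≤ n)
  have hαβ : α < β := by linarith [hα.2, hβ.1]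
  have hβγ : β < γ := by linarith [hβ.2]
  have hprod := monic_cubic_eq_prod_X_sub_C (monic_spectralCubic n) (natDegree_spectralCubic n)
    hαβ.ne (hαβ.trans hβγ).ne hβγ.ne rα rβ rγ
  exact ⟨hχ, α, β, γ, hαβ, hβγ, hα, hβ, hγ₁₃, hγ₁₅, by rw [hχ, hprod]⟩
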